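/- Let V(x) = x²/2 + ℓx⁴/4 + f(x) be a C⁵ perturbed quartic potential with ℓ ∈ {−1,1} equal to the sign of V⁽⁴⁾(0). For every T > 0 there exist v₀ > 0 and C > 0 such that for all |v| < v₀, the solution x(v;·) of ẍ = −V'(x) with x(v;0) = 0, ẋ(v;0) = v and the solution x_ℓ(v;·) of ẍ = −x − ℓx³ with the same initial conditions both exist on [0,T] and satisfy max over t ∈ [0,T] of (|x(v;t) − x_ℓ(v;t)|, |ẋ(v;t) − ẋ_ℓ(v;t)|, |ẍ(v;t) − ẍ_ℓ(v;t)|) ≤ C v⁴. -/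

import Mathlib

open Real Filter Asymptotics Topology

/-- `V` is a C⁵ perturbed quartic potential `V(x) = x²/2 + ℓx⁴/4 + f(x)` with
`ℓ ∈ {-1,1}` (equal to the sign of `V⁽⁴⁾(0)`) and `|f⁽ⁱ⁾(x)| = O(|x|^{5-i})` as `x → 0`. -/
def PerturbedQuartic (V f : ℝ → ℝ) (l : ℝ) : Prop :=
  (l = 1 ∨ l = -1) ∧ ContDiff ℝ 5 f ∧
  (∀ x : ℝ, V x = x ^ 2 / 2 + l * x ^ 4 / 4 + f x) ∧
  (∀ i : ℕ, i ≤ 5 → (iteratedDeriv i f) =O[𝓝 0] fun x : ℝ => |x| ^ (5 - i))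

/-- A priori exponential bound for small solutions of `ÿ = g(y)`. -/
lemma apriori_bound (y g : ℝ → ℝ) (v r T : ℝ) (hg : ∀ z, |z| ≤ r → |g z| ≤ 3 * |z|)
    (hy : ContDiff ℝ 2 y) (h0 : y 0 = 0) (h1 : deriv y 0 = v)
    (h2 : ∀ t, deriv (deriv y) t = g (y t)) (hv : |v| * exp (4 * T) < r) :
    ∀ t ∈ Set.Icc (0 : ℝ) T, |y t| ≤ |v| * exp (4 * t) := by
  have hd : ∀ t, HasDerivAt y (deriv y t) t := fun t =>
    (hy.differentiable (by norm_num) t).hasDerivAt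
  have hd2 : ∀ t, HasDerivAt (deriv y) (g (y t)) t := fun t => by
    rw [← h2 t]
    have : ContDiff ℝ 1 (deriv y) := by
      have := hy
      rw [show (2 : WithTop ℕ∞) = 1 + 1 by norm_num, contDiff_succ_iff_deriv] at this
      exact this.2.2
    exact (this.differentiable (by norm_num) t).hasDerivAt
  have key : ∀ c, |v| < c → c * exp (4 * T) < r → ∀ t ∈ Set.Icc (0 : ℝ) T,
      ‖(y t, deriv y t)‖ ≤ c * exp (4 * t) := by
    intro c hc hcr
    have hc0 : 0 < c := lt_of_le_of_lt (abs_nonneg v) hc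
    have hB : ∀ t, HasDerivAt (fun t => c * exp (4 * t)) (c * (exp (4 * t) * (4 * 1))) t :=
      fun t => (((hasDerivAt_id t).const_mul 4).exp).const_mul c
    refine fun t ht => image_norm_le_of_norm_deriv_right_lt_deriv_boundary
      (f := fun t => (y t, deriv y t)) (f' := fun t => (deriv y t, g (y t)))
      (B := fun t => c * exp (4 * t)) (B' := fun t => c * (exp (4 * t) * (4 * 1)))
      ?_ ?_ ?_ hB ?_ ht
    · exact fun t _ => ((hd t).prodMk (hd2 t)).continuousAt.continuousWithinAt
    · exact fun t _ => ((hd t).prodMk (hd2 t)).hasDerivWithinAt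
    · simp [h0, h1, hc.le, hc0.le]
    · intro t ht heq
      have e0 := exp_pos (4 * t)
      have hp : 0 < c * exp (4 * t) := by positivity
      have hle : c * exp (4 * t) ≤ c * exp (4 * T) := by
        have := ht.2
        gcongr
      have b1 : |y t| ≤ c * exp (4 * t) := heq ▸ norm_fst_le (y t, deriv y t)
      have b2 : |deriv y t| ≤ c * exp (4 * t) := heq ▸ norm_snd_le (y t, deriv y t)
      have b3 := hg (y t) (by linarith)
      rw [Prod.norm_def]
      simp only [Real.norm_eq_abs]
      apply max_lt <;> linarith
  intro t ht
  by_contra! hcon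
  have hlt : |v| < min (|y t| / exp (4 * t)) (r / exp (4 * T)) := by
    apply lt_min
    · rwa [lt_div_iff₀ (exp_pos _)]
    · rwa [lt_div_iff₀ (exp_pos _)]
  obtain ⟨c, hc1, hc2⟩ := exists_between hlt
  have := key c hc1 ((lt_div_iff₀ (exp_pos _)).1 (hc2.trans_le (min_le_right _ _))) t ht
  have h3 := (lt_div_iff₀ (exp_pos _)).1 (hc2.trans_le (min_le_left _ _))
  have h4 : |y t| ≤ ‖(y t, deriv y t)‖ := norm_fst_le (y t, deriv y t)
  linarith

/-- the solutions of `ẍ = -V'(x)` and of `ẍ = -x - ℓx³` with the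
same initial conditions `x(0) = 0`, `ẋ(0) = v` stay `Cv⁴`-close in C²-norm on
any fixed time interval `[0,T]`, for `v` small. -/
theorem statement11 (V f : ℝ → ℝ) (l : ℝ) (hV : PerturbedQuartic V f l)
    (v₁ : ℝ) (hv₁ : 0 < v₁) (x xl : ℝ → ℝ → ℝ)
    -- `x v` solves `ẍ = -V'(x)` with `x(0) = 0`, `ẋ(0) = v`:
    (hx : ∀ v : ℝ, |v| ≤ v₁ → ContDiff ℝ 2 (x v) ∧ x v 0 = 0 ∧ deriv (x v) 0 = v ∧
      ∀ t : ℝ, deriv (deriv (x v)) t = -(deriv V (x v t)))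
    -- `xl v` solves `ẍ = -x - ℓx³` with the same initial conditions:
    (hxl : ∀ v : ℝ, |v| ≤ v₁ → ContDiff ℝ 2 (xl v) ∧ xl v 0 = 0 ∧ deriv (xl v) 0 = v ∧
      ∀ t : ℝ, deriv (deriv (xl v)) t = -(xl v t + l * (xl v t) ^ 3)) :
    ∀ T : ℝ, 0 < T → ∃ v₀ > (0 : ℝ), v₀ ≤ v₁ ∧ ∃ C > (0 : ℝ),
      ∀ v : ℝ, |v| < v₀ → ∀ t ∈ Set.Icc (0 : ℝ) T,
        |x v t - xl v t| ≤ C * v ^ 4 ∧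
        |deriv (x v) t - deriv (xl v) t| ≤ C * v ^ 4 ∧
        |deriv (deriv (x v)) t - deriv (deriv (xl v)) t| ≤ C * v ^ 4 := by
  intro T hT
  obtain ⟨hl, hf, hVf, hO⟩ := hV
  have hl1 : |l| = 1 := by rcases hl with h | h <;> simp [h]
  have hdV : ∀ z, deriv V z = z + l * z ^ 3 + deriv f z := by
    intro z
    have hfz : HasDerivAt f (deriv f z) z := (hf.differentiable (by norm_num) z).hasDerivAt
    have h := ((((hasDerivAt_id z).pow 2).div_const 2).add
      ((((hasDerivAt_id z).pow 4).const_mul l).div_const 4)).add hfz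
    have hV' : V = (((id ^ 2 : ℝ → ℝ)) · / 2) + (fun x => l * (id ^ 4 : ℝ → ℝ) x / 4) + f := by
      funext z; simp [hVf]
    rw [hV', h.deriv]
    simp
    ring
  have h1 := hO 1 (by norm_num)
  rw [iteratedDeriv_one] at h1
  obtain ⟨K, hK, hb⟩ := h1.exists_pos
  rw [IsBigOWith, Metric.eventually_nhds_iff] at hb
  obtain ⟨d, hd, hb⟩ := hb
  set r := min (d / 2) (min 1 (1 / K)) with hr
  have hr0 : 0 < r := by positivity
  have hrd : r < d := lt_of_le_of_lt (min_le_left _ _) (by linarith)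
  have hr1 : r ≤ 1 := (min_le_right _ _).trans (min_le_left _ _)
  have hrK : K * r ≤ 1 := by
    have : r ≤ 1 / K := (min_le_right _ _).trans (min_le_right _ _)
    rw [le_div_iff₀ hK] at this
    linarith
  have hfb : ∀ z, |z| ≤ r → |deriv f z| ≤ K * |z| ^ 4 := by
    intro z hz
    have := hb (y := z) (by simpa using lt_of_le_of_lt hz hrd)
    simpa using this
  have hcub : ∀ z, |z| ≤ r → |l * z ^ 3| ≤ |z| := by
    intro z hz
    rw [abs_mul, hl1, one_mul, abs_pow]
    exact pow_le_of_le_one (abs_nonneg z) (hz.trans hr1) (by norm_num)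
  have hg1 : ∀ z, |z| ≤ r → |-(z + l * z ^ 3)| ≤ 3 * |z| := by
    intro z hz
    rw [abs_neg]
    have := abs_add_le z (l * z ^ 3)
    have := hcub z hz
    have := abs_nonneg z
    linarith
  have hg2 : ∀ z, |z| ≤ r → |-(deriv V z)| ≤ 3 * |z| := by
    intro z hz
    rw [abs_neg, hdV]
    have a1 := abs_add_le z (l * z ^ 3)
    have a2 := abs_add_le (z + l * z ^ 3) (deriv f z)
    have a3 := hcub z hz
    have a4 := abs_nonneg z
    have a5 := hfb z hz
    have a6 : K * |z| ^ 4 ≤ |z| := by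
      have b1 : K * |z| ≤ 1 := (mul_le_mul_of_nonneg_left hz hK.le).trans hrK
      have b2 : |z| ^ 3 ≤ |z| := pow_le_of_le_one a4 (hz.trans hr1) (by norm_num)
      calc K * |z| ^ 4 = (K * |z|) * |z| ^ 3 := by ring
        _ ≤ 1 * |z| := by gcongr
        _ = |z| := one_mul _
    linarith
  set E := exp (4 * T) with hE
  have hE0 : 0 < E := exp_pos _
  have hE1 : 1 ≤ E := by rw [hE]; exact one_le_exp (by linarith)
  set M := K * E ^ 4 with hM
  have hM0 : 0 < M := by positivity
  refine ⟨min v₁ (r / E), by positivity, min_le_left _ _, M * (4 * E + 1), by positivity, ?_⟩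
  intro v hv
  have hvr : |v| * E < r := (lt_div_iff₀ hE0).1 (hv.trans_le (min_le_right _ _))
  have hv1 : |v| ≤ v₁ := (hv.trans_le (min_le_left _ _)).le
  obtain ⟨x1, x2, x3, x4⟩ := hx v hv1
  obtain ⟨y1, y2, y3, y4⟩ := hxl v hv1
  have bnd : ∀ t ∈ Set.Icc (0:ℝ) T, |v| * exp (4 * t) ≤ |v| * E := by
    intro t ht
    have := ht.2
    rw [hE]; gcongr
  have bx : ∀ t ∈ Set.Icc (0:ℝ) T, |x v t| ≤ |v| * E := fun t ht =>
    (apriori_bound (x v) (fun z => -(deriv V z)) v r T hg2 x1 x2 x3 x4 hvr t ht).trans (bnd t ht)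
  have bxl : ∀ t ∈ Set.Icc (0:ℝ) T, |xl v t| ≤ |v| * E := fun t ht =>
    (apriori_bound (xl v) (fun z => -(z + l * z ^ 3)) v r T hg1 y1 y2 y3 y4 hvr t ht).trans
      (bnd t ht)
  have hacc : ∀ t ∈ Set.Icc (0:ℝ) T, |deriv (deriv (x v)) t - deriv (deriv (xl v)) t| ≤
      4 * |x v t - xl v t| + M * v ^ 4 := by
    intro t ht
    rw [x4, y4, hdV]
    have p1 := bx t ht
    have p2 := bxl t ht
    have q1 : |x v t| ≤ 1 := by linarith
    have q2 : |xl v t| ≤ 1 := by linarith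
    have p3 := hfb (x v t) (by linarith)
    have p4 : K * |x v t| ^ 4 ≤ M * v ^ 4 := by
      calc K * |x v t| ^ 4 ≤ K * (|v| * E) ^ 4 := by gcongr
        _ = M * |v| ^ 4 := by rw [hM]; ring
        _ = M * v ^ 4 := by rw [Even.pow_abs (by decide)]
    generalize x v t = a at *
    generalize xl v t = b at *
    have e : -(a + l * a ^ 3 + deriv f a) - -(b + l * b ^ 3) =
        -((a - b) + l * ((a - b) * (a ^ 2 + a * b + b ^ 2)) + deriv f a) := by ring
    rw [e, abs_neg]
    have s1 := abs_add_le ((a - b) + l * ((a - b) * (a ^ 2 + a * b + b ^ 2))) (deriv f a)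
    have s2 := abs_add_le (a - b) (l * ((a - b) * (a ^ 2 + a * b + b ^ 2)))
    have s3 : |l * ((a - b) * (a ^ 2 + a * b + b ^ 2))| ≤ |a - b| * 3 := by
      rw [abs_mul, hl1, one_mul, abs_mul]
      gcongr
      rw [abs_le] at q1 q2 ⊢
      constructor <;> nlinarith
    linarith
  have hd2 : ∀ y : ℝ → ℝ, ContDiff ℝ 2 y → ∀ t,
      HasDerivAt (fun t => (y t, deriv y t)) (deriv y t, deriv (deriv y) t) t := by
    intro y hy t
    have : ContDiff ℝ 1 (deriv y) := by
      have := hy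
      rw [show (2 : WithTop ℕ∞) = 1 + 1 by norm_num, contDiff_succ_iff_deriv] at this
      exact this.2.2
    exact (hy.differentiable (by norm_num) t).hasDerivAt.prodMk
      (this.differentiable (by norm_num) t).hasDerivAt
  have hv4 : 0 ≤ v ^ 4 := by positivity
  have hw : ∀ t ∈ Set.Icc (0:ℝ) T,
      ‖(x v t, deriv (x v) t) - (xl v t, deriv (xl v) t)‖ ≤ M * E * v ^ 4 := by
    intro t ht
    have hD := fun t => (hd2 _ x1 t).sub (hd2 _ y1 t)
    have := norm_le_gronwallBound_of_norm_deriv_right_le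
      (f := fun t => (x v t, deriv (x v) t) - (xl v t, deriv (xl v) t))
      (f' := fun t => (deriv (x v) t, deriv (deriv (x v)) t) -
        (deriv (xl v) t, deriv (deriv (xl v)) t)) (δ := 0) (K := 4) (ε := M * v ^ 4)
      (a := 0) (b := T) (fun t _ => (hD t).continuousAt.continuousWithinAt)
      (fun t _ => (hD t).hasDerivWithinAt) (by simp [x2, x3, y2, y3]) ?_ t ht
    · refine this.trans ?_
      rw [gronwallBound_of_K_ne_0 (by norm_num)]
      have h1 : exp (4 * (t - 0)) ≤ E := by
        have := ht.2
        rw [hE]; gcongr; linarith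
      have h2 : 0 ≤ M * v ^ 4 := by positivity
      have h3 := mul_le_mul_of_nonneg_left h1 h2
      have h4 := mul_nonneg h2 hE0.le
      simp only
      nlinarith
    · intro s hs
      have a1 := hacc s ⟨hs.1, hs.2.le⟩
      have a2 : |x v s - xl v s| ≤ ‖(x v s, deriv (x v) s) - (xl v s, deriv (xl v) s)‖ :=
        norm_fst_le ((x v s, deriv (x v) s) - (xl v s, deriv (xl v) s))
      have a3 : |deriv (x v) s - deriv (xl v) s| ≤
          ‖(x v s, deriv (x v) s) - (xl v s, deriv (xl v) s)‖ :=
        norm_snd_le ((x v s, deriv (x v) s) - (xl v s, deriv (xl v) s))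
      have a4 : 0 ≤ M * v ^ 4 := by positivity
      have a5 := norm_nonneg ((x v s, deriv (x v) s) - (xl v s, deriv (xl v) s))
      refine max_le ?_ ?_
      · exact a3.trans (by linarith)
      · exact a1.trans (by linarith)
  intro t ht
  have a0 := hw t ht
  have a1 := hacc t ht
  have a2 : |x v t - xl v t| ≤ ‖(x v t, deriv (x v) t) - (xl v t, deriv (xl v) t)‖ :=
    norm_fst_le ((x v t, deriv (x v) t) - (xl v t, deriv (xl v) t))
  have a3 : |deriv (x v) t - deriv (xl v) t| ≤
      ‖(x v t, deriv (x v) t) - (xl v t, deriv (xl v) t)‖ :=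
    norm_snd_le ((x v t, deriv (x v) t) - (xl v t, deriv (xl v) t))
  have a4 : 0 ≤ M * v ^ 4 := by positivity
  have a5 : 0 ≤ M * E * v ^ 4 := by positivity
  have a6 : M * (4 * E + 1) * v ^ 4 = 4 * (M * E * v ^ 4) + M * v ^ 4 := by ring
  rw [a6]
  refine ⟨?_, ?_, ?_⟩ <;> linarith
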